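/- (Example 3, second equation) For any real numbers a, b, c and any natural number n ≥ 1, the polynomial P(x) = (x + a)(x + b)[(x + a)^{2n} + (x + b)^{2n}] − c satisfies P(x) = P(−a − b − x) for all real x, and there exists a polynomial Q with real coefficients of degree at most n + 1 such that P(x) = Q((x + (a + b)/2)²) for all real x. -/

import Mathlib

/-!
Put `y = x + s` with `2 * s = a + b`, and `d = a - s`. Then `x + a = y + d` and `x + b = y - d`, so
the product `(x + a) * (x + b)` is `y ^ 2 - d ^ 2`, and the power sum is `p y + p (-y)` for
`p = (X + d) ^ (2 * n)`. Symmetrizing a polynomial kills its odd coefficients and doubles the even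
ones, so the power sum is a polynomial in `y ^ 2` of half the degree of `p`. The symmetry of `P` is
then the invariance of `y ^ 2` under `y ↦ -y`.
-/

open Polynomial

lemma natDegree_contract_le {R : Type*} [CommSemiring R] {k : ℕ} (hk : k ≠ 0) (p : R[X]) :
    (contract k p).natDegree ≤ p.natDegree / k := by
  refine natDegree_le_iff_coeff_eq_zero.2 fun m hm => ?_
  rw [coeff_contract hk]
  exact coeff_eq_zero_of_natDegree_lt ((Nat.div_lt_iff_lt_mul hk.bot_lt).1 hm)

lemma coeff_comp_neg_X {R : Type*} [Ring R] (p : R[X]) (m : ℕ) :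
    (p.comp (-X)).coeff m = p.coeff m * (-1) ^ m := by
  rw [← comp_C_mul_X_coeff, C_neg, C_1, neg_one_mul]

section CommRing

variable {R : Type*} [CommRing R]

lemma add_comp_neg_X_eq_expand_contract (p : R[X]) :
    p + p.comp (-X) = expand R 2 (C 2 * contract 2 p) := by
  ext m
  rw [coeff_add, coeff_comp_neg_X, coeff_expand two_pos]
  split_ifs with hm
  · rw [coeff_C_mul, coeff_contract two_ne_zero, Nat.div_mul_cancel hm,
      (even_iff_two_dvd.2 hm).neg_one_pow, mul_one, two_mul]
  · rw [(Nat.not_even_iff_odd.1 (mt even_iff_two_dvd.1 hm)).neg_one_pow, mul_neg_one,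
      add_neg_cancel]

lemma eval_add_eval_neg_eq_eval_sq (p : R[X]) (y : R) :
    p.eval y + p.eval (-y) = (C 2 * contract 2 p).eval (y ^ 2) := by
  rw [← expand_eval, ← add_comp_neg_X_eq_expand_contract, eval_add, eval_comp, eval_neg, eval_X]

lemma exists_natDegree_le_add_pow_add_sub_pow_eq_eval_sq (d : R) (n : ℕ) :
    ∃ S : R[X], S.natDegree ≤ n ∧
      ∀ y : R, (y + d) ^ (2 * n) + (y - d) ^ (2 * n) = S.eval (y ^ 2) := by
  have natDegree_le : ((X + C d) ^ (2 * n)).natDegree ≤ 2 * n := by compute_degree!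
  refine ⟨C 2 * contract 2 ((X + C d) ^ (2 * n)), ?_, fun y => ?_⟩
  · calc (C 2 * contract 2 ((X + C d) ^ (2 * n))).natDegree
        ≤ (contract 2 ((X + C d) ^ (2 * n))).natDegree := natDegree_C_mul_le _ _
      _ ≤ ((X + C d) ^ (2 * n)).natDegree / 2 := natDegree_contract_le two_ne_zero _
      _ ≤ n := Nat.div_le_of_le_mul natDegree_le
  · have neg_add_pow : (-y + d) ^ (2 * n) = (y - d) ^ (2 * n) := by
      rw [← (even_two_mul n).neg_pow, neg_add', neg_neg]
    rw [← eval_add_eval_neg_eq_eval_sq]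
    simp only [eval_pow, eval_add, eval_X, eval_C, neg_add_pow]

theorem example3_second_general (a b c s : R) (hs : 2 * s = a + b) (n : ℕ)
    (P : R → R)
    (hP : ∀ x : R, P x =
      (x + a) * (x + b) * ((x + a) ^ (2 * n) + (x + b) ^ (2 * n)) - c) :
    (∀ x : R, P x = P (-a - b - x)) ∧
    ∃ Q : R[X], Q.natDegree ≤ n + 1 ∧ ∀ x : R, P x = Q.eval ((x + s) ^ 2) := by
  obtain ⟨S, hS, S_eval⟩ := exists_natDegree_le_add_pow_add_sub_pow_eq_eval_sq (a - s) n
  let Q : R[X] := (X - C ((a - s) ^ 2)) * S - C c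
  have Q_natDegree : Q.natDegree ≤ n + 1 := by
    rw [natDegree_sub_C, add_comm]
    exact natDegree_mul_le_of_le (natDegree_X_sub_C_le _) hS
  have P_eq : ∀ x, P x = Q.eval ((x + s) ^ 2) := fun x => by
    have ha : x + a = x + s + (a - s) := by ring
    have hb : x + b = x + s - (a - s) := by linear_combination -hs
    rw [hP, ha, hb, S_eval]
    simp only [Q, eval_sub, eval_mul, eval_X, eval_C]
    ring
  refine ⟨fun x => ?_, Q, Q_natDegree, P_eq⟩
  have reflect : -a - b - x + s = -(x + s) := by linear_combination hs
  rw [P_eq, P_eq, reflect, neg_sq]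

end CommRing

theorem example3_second (a b c : ℝ) (n : ℕ) (hn : 1 ≤ n)
    (P : ℝ → ℝ)
    (hP : ∀ x : ℝ, P x =
      (x + a) * (x + b) * ((x + a) ^ (2 * n) + (x + b) ^ (2 * n)) - c) :
    (∀ x : ℝ, P x = P (-a - b - x)) ∧
    ∃ Q : Polynomial ℝ, Q.natDegree ≤ n + 1 ∧
      ∀ x : ℝ, P x = Q.eval ((x + (a + b) / 2) ^ 2) :=
  example3_second_general a b c _ (mul_div_cancel₀ _ two_ne_zero) n P hP
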